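/- For every τ in the Siegel upper half-space H₂, there exists an even half-integer characteristic m = (a,b) (with a, b ∈ {0,1/2}² and 4·aᵀb even) such that Θ_m(τ) ≠ 0. Equivalently, the ten even theta constants have no common zero on H₂, so that τ ↦ (Θ_m(τ)⁴)_{m even} defines a map from H₂ to the projective space ℙ⁹(ℂ). -/

import Mathlib

open scoped BigOperators
open Complex Matrix

noncomputable section

/-- `τ` belongs to the Siegel upper half-space of degree 2: it is a symmetric
`2 × 2` complex matrix whose imaginary part is positive definite. -/
def IsSiegel (τ : Matrix (Fin 2) (Fin 2) ℂ) : Prop :=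
  τ.IsSymm ∧ (Matrix.of fun i j => (τ i j).im).PosDef

/-- The term of index `n ∈ ℤ²` of the theta series with characteristic `(a, b)`. -/
def thetaTerm (a b : Fin 2 → ℝ) (τ : Matrix (Fin 2) (Fin 2) ℂ) (n : Fin 2 → ℤ) : ℂ :=
  Complex.exp (2 * Real.pi * Complex.I *
      (∑ i, ∑ j, ((n i : ℂ) + (a i : ℂ)) * τ i j * ((n j : ℂ) + (a j : ℂ)))
    + 2 * Real.pi * Complex.I * (∑ i, (n i : ℂ) * (b i : ℂ)))

/-- The theta constant `Θ_{(a,b)}(τ)`. -/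
def Theta (a b : Fin 2 → ℝ) (τ : Matrix (Fin 2) (Fin 2) ℂ) : ℂ :=
  ∑' n : Fin 2 → ℤ, thetaTerm a b τ n

/-- `(a, b)` is a half-integer characteristic when all entries lie in `{0, 1/2}`. -/
def IsHalf (a : Fin 2 → ℝ) : Prop := ∀ i, a i = 0 ∨ a i = 1 / 2

/-!
Let `θ(z, τ)` be Riemann's theta function, so that `Θ_{(0,b)}(τ) = θ(b, 2τ)`. The characteristics
`(0, b)` are all even, and already the `θ(b, τ)` with `b ∈ {0, 1/2}^g` have no common zero. Indeed,
the parallelogram law `Q(n) + Q(m) = (Q(n + m) + Q(n - m)) / 2` applied to the double series of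
`θ(z, τ)²`, with the pairs `(n, m)` grouped by `s = n + m`, gives

  `θ(z, τ)² = ∑ₛ e(s, z) C(s)`,

where `e(s, z)` is the summand of `θ(z, τ / 2)` and the second order theta constant `C(s)` depends
only on `s` modulo 2. Orthogonality of the signs `s ↦ (-1)^(2 bᵀs)` then expresses `C(c)²` as a
linear combination of the `θ(b, τ)²`. If these all vanish, then so does every `C(c)`, hence
`θ(z, τ) = 0` for all `z`. But the Fourier coefficients `exp(πi nᵀτn)` of `θ(·, τ)` are nonzero.
-/

open scoped Real

section Summation

theorem summable_prod_apply_of_nonneg {ι κ : Type*} [Fintype ι] {f : ι → κ → ℝ}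
    (hf₀ : ∀ i k, 0 ≤ f i k) (hf : ∀ i, Summable (f i)) :
    Summable fun n : ι → κ ↦ ∏ i, f i (n i) := by
  classical
  refine summable_of_sum_le (fun n ↦ Finset.prod_nonneg fun i _ ↦ hf₀ i (n i))
    (c := ∏ i, ∑' k, f i k) fun u ↦ ?_
  have hu : u ⊆ Fintype.piFinset fun i ↦ u.image (· i) := fun n hn ↦
    Fintype.mem_piFinset.2 fun i ↦ Finset.mem_image_of_mem (· i) hn
  calc ∑ n ∈ u, ∏ i, f i (n i)
      ≤ ∑ n ∈ Fintype.piFinset fun i ↦ u.image (· i), ∏ i, f i (n i) :=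
        Finset.sum_le_sum_of_subset_of_nonneg hu fun n _ _ ↦
          Finset.prod_nonneg fun i _ ↦ hf₀ i (n i)
    _ = ∏ i, ∑ k ∈ u.image (· i), f i k := (Finset.prod_univ_sum _ _).symm
    _ ≤ ∏ i, ∑' k, f i k :=
        Finset.prod_le_prod (fun i _ ↦ Finset.sum_nonneg fun k _ ↦ hf₀ i k)
          fun i _ ↦ (hf i).sum_le_tsum _ fun k _ ↦ hf₀ i k

theorem tsum_prod_one_add_neg_one_zpow_mul {ι : Type*} [Fintype ι] (g : (ι → ℤ) → ℂ)
    (c : ι → ℤ) :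
    ∑' s : ι → ℤ, (∏ i, (1 + (-1 : ℂ) ^ (c i + s i))) * g s =
      2 ^ Fintype.card ι * ∑' m : ι → ℤ, g (c - 2 • m) := by
  have hinj : Function.Injective fun m : ι → ℤ ↦ c - 2 • m := fun m m' h ↦
    funext fun i ↦ by simpa using congrFun h i
  rw [← tsum_mul_left, ← hinj.tsum_eq]
  · refine tsum_congr fun m ↦ ?_
    have hone (i : ι) : (-1 : ℂ) ^ (c i + (c - 2 • m) i) = 1 :=
      Even.neg_one_zpow ⟨c i - m i, by
        simp only [two_nsmul, Pi.sub_apply, Pi.add_apply]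
        ring⟩
    simp only [hone, one_add_one_eq_two, Finset.prod_const, Finset.card_univ]
  · intro s hs
    have heven (i : ι) : Even (c i + s i) := by
      by_contra hodd
      refine hs (mul_eq_zero_of_left (Finset.prod_eq_zero (Finset.mem_univ i) ?_) _)
      rw [(Int.not_even_iff_odd.1 hodd).neg_one_zpow, add_neg_cancel]
    choose k hk using heven
    refine ⟨c - k, funext fun i ↦ ?_⟩
    suffices c i - 2 * (c i - k i) = s i by simpa
    linarith [hk i]

end Summation

section Fourier

/-- The normalised Haar measure, which `UnitAddTorus.mFourierLp` is built on although Mathlib only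
makes it a local instance. -/
local instance : MeasureTheory.MeasureSpace UnitAddCircle :=
  ⟨AddCircle.haarAddCircle⟩

local instance : MeasureTheory.IsProbabilityMeasure
    (MeasureTheory.volume : MeasureTheory.Measure UnitAddCircle) :=
  inferInstanceAs (MeasureTheory.IsProbabilityMeasure AddCircle.haarAddCircle)

open UnitAddTorus MeasureTheory in
theorem eq_zero_of_tsum_mul_mFourier_eq_zero {d : Type*} [Fintype d] {a : (d → ℤ) → ℂ}
    (ha : Summable a) (h : ∀ x : UnitAddTorus d, ∑' n, a n * mFourier n x = 0) : a = 0 := by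
  classical
  have hsummable : Summable fun n ↦ a n • mFourier (d := d) n :=
    .of_norm <| by simpa only [norm_smul, mFourier_norm, mul_one] using ha.norm
  have hsum : HasSum (fun n ↦ a n • mFourier (d := d) n) 0 := by
    convert hsummable.hasSum
    ext x
    simpa [← ContinuousMap.tsum_apply hsummable x] using (h x).symm
  funext k
  have hcoeff := ((innerSL ℂ (mFourierLp (d := d) 2 k)).comp
    (ContinuousMap.toLp (E := ℂ) 2 volume ℂ)).hasSum hsum
  simp only [map_smul, ContinuousLinearMap.comp_apply, innerSL_apply_apply, map_zero,
    orthonormal_iff_ite.1 orthonormal_mFourier, smul_eq_mul, mul_ite, mul_one, mul_zero] at hcoeff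
  simpa using hcoeff.tsum_eq

end Fourier

variable {ι : Type*} [Fintype ι]

theorem exists_pos_mul_dotProduct_le_of_posDef {Y : Matrix ι ι ℝ} (hY : Y.PosDef) :
    ∃ c > 0, ∀ x : ι → ℝ, c * (x ⬝ᵥ x) ≤ x ⬝ᵥ Y *ᵥ x := by
  classical
  cases isEmpty_or_nonempty ι
  · exact ⟨1, one_pos, fun x ↦ by simp⟩
  open scoped MatrixOrder in
  obtain ⟨c, hc, hle⟩ := (CFC.exists_pos_algebraMap_le_iff hY.1).2 fun x hx ↦
    hY.isStrictlyPositive.spectrum_pos hx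
  refine ⟨c, hc, fun x ↦ ?_⟩
  have := (Matrix.le_iff.1 hle).dotProduct_mulVec_nonneg x
  simpa [sub_mulVec, Algebra.algebraMap_eq_smul_one, smul_mulVec] using this

/-- The summand of index `n` of the Riemann theta series; `jacobiTheta₂_term` is the case of
genus one. -/
def riemannThetaTerm (n : ι → ℤ) (z : ι → ℂ) (τ : Matrix ι ι ℂ) : ℂ :=
  cexp (2 * π * I * ((Int.cast ∘ n) ⬝ᵥ z) +
    π * I * ((Int.cast ∘ n) ⬝ᵥ τ *ᵥ (Int.cast ∘ n)))

/-- The Riemann theta function `θ(z, τ) = ∑ exp(2πi nᵀz + πi nᵀτn)` in its classical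
normalisation, so that the theta constant `Θ_{(0,b)}(τ)` is `θ(b, 2τ)`. -/
def riemannTheta (z : ι → ℂ) (τ : Matrix ι ι ℂ) : ℂ :=
  ∑' n : ι → ℤ, riemannThetaTerm n z τ

/-- The part of the theta series `θ(z, τ)` over the coset `s + 2ℤ^ι`. At `τ / 2` it is the second
order theta function of characteristic `s / 2` at `z`. -/
def riemannThetaCoset (s : ι → ℤ) (z : ι → ℂ) (τ : Matrix ι ι ℂ) : ℂ :=
  ∑' m : ι → ℤ, riemannThetaTerm (s - 2 • m) z τ

/-- The half period with support `S`. These are the representatives in `{0, 1/2}^ι` of the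
two-torsion points of `ℝ^ι / ℤ^ι`; indexing them by finsets makes sums of signs expand by
`Finset.prod_one_add`. -/
def halfPeriod [DecidableEq ι] (S : Finset ι) : ι → ℝ :=
  fun i ↦ if i ∈ S then 1 / 2 else 0

theorem riemannThetaCoset_sub_two_nsmul (s k : ι → ℤ) (z : ι → ℂ) (τ : Matrix ι ι ℂ) :
    riemannThetaCoset (s - 2 • k) z τ = riemannThetaCoset s z τ := by
  rw [riemannThetaCoset, riemannThetaCoset,
    ← (Equiv.addLeft k).tsum_eq fun m ↦ riemannThetaTerm (s - 2 • m) z τ]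
  refine (tsum_congr fun m ↦ ?_).symm
  rw [Equiv.coe_addLeft, smul_add, sub_sub]

theorem norm_riemannThetaTerm (n : ι → ℤ) (z : ι → ℂ) (τ : Matrix ι ι ℂ) :
    ‖riemannThetaTerm n z τ‖ = Real.exp (-π * ((Int.cast ∘ n) ⬝ᵥ τ.map im *ᵥ (Int.cast ∘ n) +
      2 * ((Int.cast ∘ n) ⬝ᵥ (im ∘ z)))) := by
  have hlin : ((Int.cast ∘ n) ⬝ᵥ z).im = (Int.cast ∘ n) ⬝ᵥ (im ∘ z) := by
    simp [dotProduct]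
  have hquad : ((Int.cast ∘ n) ⬝ᵥ τ *ᵥ (Int.cast ∘ n)).im =
      (Int.cast ∘ n) ⬝ᵥ τ.map im *ᵥ (Int.cast ∘ n) := by
    simp [dotProduct, mulVec]
  rw [riemannThetaTerm, Complex.norm_exp, ← hlin, ← hquad]
  congr 1
  simp only [add_re, mul_re, re_ofNat, ofReal_re, im_ofNat, ofReal_im, mul_zero, sub_zero, I_re,
    mul_im, zero_mul, add_zero, I_im, mul_one, sub_self, zero_sub, neg_mul]
  ring

theorem summable_riemannThetaTerm {τ : Matrix ι ι ℂ} (hτ : (τ.map im).PosDef) (z : ι → ℂ) :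
    Summable fun n ↦ riemannThetaTerm n z τ := by
  obtain ⟨c, hc, hle⟩ := exists_pos_mul_dotProduct_le_of_posDef hτ
  have hbound := summable_prod_apply_of_nonneg
    (f := fun i (k : ℤ) ↦ Real.exp (-π * (c * k ^ 2 - 2 * |(z i).im| * |k|)))
    (fun _ _ ↦ (Real.exp_pos _).le)
    fun i ↦ by simpa using summable_pow_mul_jacobiTheta₂_term_bound |(z i).im| hc 0
  refine .of_norm_bounded hbound fun n ↦ ?_
  have hlin : -∑ i, |(z i).im| * |(n i : ℝ)| ≤ (Int.cast ∘ n) ⬝ᵥ (im ∘ z) := by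
    rw [← Finset.sum_neg_distrib]
    refine Finset.sum_le_sum fun i _ ↦ ?_
    rw [← abs_mul, mul_comm]
    exact neg_abs_le _
  have hquad : c * ∑ i, (n i : ℝ) ^ 2 ≤ (Int.cast ∘ n) ⬝ᵥ τ.map im *ᵥ (Int.cast ∘ n) := by
    simpa [dotProduct, sq] using hle (Int.cast ∘ n)
  rw [norm_riemannThetaTerm, ← Real.exp_sum, Real.exp_le_exp, ← Finset.mul_sum, neg_mul, neg_mul,
    neg_le_neg_iff, mul_le_mul_iff_right₀ Real.pi_pos]
  simp only [Int.cast_abs, Finset.sum_sub_distrib, mul_assoc, ← Finset.mul_sum]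
  linarith

theorem riemannThetaTerm_add_mul_sub (n m : ι → ℤ) (z w : ι → ℂ) (τ : Matrix ι ι ℂ) :
    riemannThetaTerm n (z + w) τ * riemannThetaTerm m (z - w) τ =
      riemannThetaTerm (n + m) z ((1 / 2 : ℂ) • τ) *
        riemannThetaTerm (n - m) w ((1 / 2 : ℂ) • τ) := by
  have hadd : (Int.cast ∘ (n + m) : ι → ℂ) = Int.cast ∘ n + Int.cast ∘ m := by ext; simp
  have hsub : (Int.cast ∘ (n - m) : ι → ℂ) = Int.cast ∘ n - Int.cast ∘ m := by ext; simp
  simp only [riemannThetaTerm, ← Complex.exp_add, hadd, hsub, smul_mulVec, mulVec_add, mulVec_sub,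
    dotProduct_add, dotProduct_sub, add_dotProduct, sub_dotProduct, dotProduct_smul, smul_eq_mul]
  ring_nf

theorem riemannThetaTerm_add_halfPeriod [DecidableEq ι] (n : ι → ℤ) (z : ι → ℂ)
    (τ : Matrix ι ι ℂ) (S : Finset ι) :
    riemannThetaTerm n (z + ofReal ∘ halfPeriod S) τ =
      (∏ i ∈ S, (-1) ^ n i) * riemannThetaTerm n z τ := by
  have hpair : (Int.cast ∘ n) ⬝ᵥ (ofReal ∘ halfPeriod S) = ∑ i ∈ S, (n i : ℂ) / 2 := by
    simp [dotProduct, halfPeriod, apply_ite, div_eq_mul_inv]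
  have hsign : ∏ i ∈ S, (-1 : ℂ) ^ n i = cexp (2 * π * I * ∑ i ∈ S, (n i : ℂ) / 2) := by
    rw [Finset.mul_sum, Complex.exp_sum]
    refine Finset.prod_congr rfl fun i _ ↦ ?_
    rw [← Complex.exp_pi_mul_I, ← Complex.exp_int_mul]
    ring_nf
  rw [hsign, ← hpair, riemannThetaTerm, riemannThetaTerm, ← Complex.exp_add, dotProduct_add]
  ring_nf

theorem riemannThetaTerm_ofReal (n : ι → ℤ) (x : ι → ℝ) (τ : Matrix ι ι ℂ) :
    riemannThetaTerm n (ofReal ∘ x) τ =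
      riemannThetaTerm n 0 τ * UnitAddTorus.mFourier n (fun i ↦ (x i : UnitAddCircle)) := by
  have hchar : UnitAddTorus.mFourier n (fun i ↦ (x i : UnitAddCircle)) =
      cexp (2 * π * I * ((Int.cast ∘ n) ⬝ᵥ (ofReal ∘ x))) := by
    simp only [UnitAddTorus.mFourier, ContinuousMap.coe_mk, fourier_coe_apply, dotProduct,
      Finset.mul_sum, Complex.exp_sum]
    simp [mul_assoc]
  rw [hchar, riemannThetaTerm, riemannThetaTerm, ← Complex.exp_add, dotProduct_zero]
  ring_nf

theorem exists_riemannTheta_ne_zero {τ : Matrix ι ι ℂ} (hτ : (τ.map im).PosDef) :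
    ∃ z : ι → ℂ, riemannTheta z τ ≠ 0 := by
  by_contra! hzero
  have hcoeff : (fun n ↦ riemannThetaTerm n 0 τ) = 0 := by
    refine eq_zero_of_tsum_mul_mFourier_eq_zero (summable_riemannThetaTerm hτ 0) fun x ↦ ?_
    choose y hy using fun i ↦ QuotientAddGroup.mk_surjective (x i)
    obtain rfl : (fun i ↦ (y i : UnitAddCircle)) = x := funext hy
    simpa only [riemannTheta, riemannThetaTerm_ofReal] using hzero (ofReal ∘ y)
  exact Complex.exp_ne_zero _ (congrFun hcoeff 0)

theorem hasSum_riemannTheta_add_mul_sub {τ : Matrix ι ι ℂ} (hτ : (τ.map im).PosDef)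
    (z w : ι → ℂ) :
    HasSum (fun s ↦ riemannThetaTerm s z ((1 / 2 : ℂ) • τ) *
        riemannThetaCoset s w ((1 / 2 : ℂ) • τ))
      (riemannTheta (z + w) τ * riemannTheta (z - w) τ) := by
  have hadd := (summable_riemannThetaTerm hτ (z + w)).norm
  have hsub := (summable_riemannThetaTerm hτ (z - w)).norm
  have hprod := (summable_mul_of_summable_norm hadd hsub).hasSum
  rw [← tsum_mul_tsum_of_summable_norm hadd hsub] at hprod
  let shear : (ι → ℤ) × (ι → ℤ) ≃ (ι → ℤ) × (ι → ℤ) :=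
    { toFun := fun p ↦ (p.1 - p.2, p.2)
      invFun := fun p ↦ (p.1 + p.2, p.2)
      left_inv := fun p ↦ by simp
      right_inv := fun p ↦ by simp }
  have hterm (s m : ι → ℤ) :
      riemannThetaTerm (s - m) (z + w) τ * riemannThetaTerm m (z - w) τ =
        riemannThetaTerm s z ((1 / 2 : ℂ) • τ) *
          riemannThetaTerm (s - 2 • m) w ((1 / 2 : ℂ) • τ) := by
    rw [riemannThetaTerm_add_mul_sub, sub_add_cancel, sub_sub, ← two_nsmul]
  rw [← shear.hasSum_iff] at hprod
  have hfiber := hprod.prod_fiberwise fun s ↦ (hprod.summable.prod_factor s).hasSum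
  simp only [shear, Function.comp_apply, Equiv.coe_fn_mk, hterm, tsum_mul_left] at hfiber
  exact hfiber

theorem sum_sign_mul_riemannTheta_halfPeriod [DecidableEq ι] {τ : Matrix ι ι ℂ}
    (hτ : (τ.map im).PosDef) (z w : ι → ℂ) (c : ι → ℤ) :
    ∑ S : Finset ι, (∏ i ∈ S, (-1) ^ c i) * (riemannTheta (z + ofReal ∘ halfPeriod S + w) τ *
        riemannTheta (z + ofReal ∘ halfPeriod S - w) τ) =
      2 ^ Fintype.card ι * (riemannThetaCoset c z ((1 / 2 : ℂ) • τ) *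
        riemannThetaCoset c w ((1 / 2 : ℂ) • τ)) := by
  set σ := (1 / 2 : ℂ) • τ
  have hsign (s : ι → ℤ) : ∑ S : Finset ι, (∏ i ∈ S, (-1 : ℂ) ^ c i) * ∏ i ∈ S, (-1) ^ s i =
      ∏ i, (1 + (-1) ^ (c i + s i)) := by
    simp [Finset.prod_one_add, ← Finset.prod_mul_distrib, zpow_add₀]
  calc
    _ = ∑' s, ∑ S : Finset ι, (∏ i ∈ S, (-1) ^ c i) *
          (riemannThetaTerm s (z + ofReal ∘ halfPeriod S) σ * riemannThetaCoset s w σ) :=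
      (hasSum_sum fun S _ ↦ (hasSum_riemannTheta_add_mul_sub hτ _ w).mul_left _).tsum_eq.symm
    _ = ∑' s, (∏ i, (1 + (-1) ^ (c i + s i))) *
          (riemannThetaTerm s z σ * riemannThetaCoset s w σ) := by
      simp only [riemannThetaTerm_add_halfPeriod, ← hsign, Finset.sum_mul, mul_assoc]
    _ = 2 ^ Fintype.card ι * ∑' m : ι → ℤ,
          riemannThetaTerm (c - 2 • m) z σ * riemannThetaCoset (c - 2 • m) w σ :=
      tsum_prod_one_add_neg_one_zpow_mul _ c
    _ = _ := by
      simp only [riemannThetaCoset_sub_two_nsmul, tsum_mul_right]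
      rfl

theorem theta_no_common_zero_general {τ : Matrix ι ι ℂ} (hτ : (τ.map im).PosDef) :
    ∃ b : ι → ℝ, (∀ i, b i = 0 ∨ b i = 1 / 2) ∧ riemannTheta (ofReal ∘ b) τ ≠ 0 := by
  classical
  by_contra! hzero
  have hhalf (S : Finset ι) : riemannTheta (ofReal ∘ halfPeriod S) τ = 0 :=
    hzero _ fun i ↦ (ite_eq_or_eq _ _ _).symm
  have hcoset (c : ι → ℤ) : riemannThetaCoset c 0 ((1 / 2 : ℂ) • τ) = 0 := by
    simpa [hhalf] using sum_sign_mul_riemannTheta_halfPeriod hτ 0 0 c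
  obtain ⟨z, hz⟩ := exists_riemannTheta_ne_zero hτ
  have hsq := hasSum_riemannTheta_add_mul_sub hτ z 0
  simp only [hcoset, mul_zero, add_zero, sub_zero] at hsq
  exact mul_ne_zero hz hz (hsq.unique hasSum_zero)

theorem Theta_zero_eq_riemannTheta (b : Fin 2 → ℝ) (τ : Matrix (Fin 2) (Fin 2) ℂ) :
    Theta 0 b τ = riemannTheta (ofReal ∘ b) ((2 : ℂ) • τ) := by
  refine tsum_congr fun n ↦ ?_
  rw [thetaTerm, riemannThetaTerm]
  congr 1
  simp only [Pi.zero_apply, ofReal_zero, add_zero, Fin.sum_univ_two, dotProduct,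
    Function.comp_apply, mulVec, Matrix.smul_apply, smul_eq_mul]
  ring

theorem IsSiegel.posDef_im_two_smul {τ : Matrix (Fin 2) (Fin 2) ℂ} (hτ : IsSiegel τ) :
    (((2 : ℂ) • τ).map im).PosDef := by
  convert hτ.2.smul (two_pos : (0 : ℝ) < 2)
  ext
  simp

/-- At every point of `H₂` at least one even half-integer theta constant is
nonzero: the ten even theta constants have no common zero. -/
theorem theta_no_common_zero (τ : Matrix (Fin 2) (Fin 2) ℂ) (hτ : IsSiegel τ) :
    ∃ a b : Fin 2 → ℝ, IsHalf a ∧ IsHalf b ∧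
      (∃ k : ℤ, 4 * ∑ i, a i * b i = 2 * (k : ℝ)) ∧ Theta a b τ ≠ 0 := by
  obtain ⟨b, hb, hne⟩ := theta_no_common_zero_general hτ.posDef_im_two_smul
  exact ⟨0, b, fun _ ↦ .inl rfl, hb, ⟨0, by simp⟩, by rwa [Theta_zero_eq_riemannTheta]⟩
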